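/- arXiv:1104.5154 — 7 statements merged into one kernel-verified Lean document; each statement's English description precedes it below -/
import Mathlib

section
/- For all real numbers h₁ > 0, h₂ > 0, ρ > 0 and ν > 0, the quantity Δ = (h₁⁴ + 4ρh₁³h₂ + 12ρ²h₁²h₂²)ν² + 4ρh₁h₂²(2ρh₂ − h₁)ν + 4ρ²h₂⁴ is strictly positive. Consequently the first-order (inviscid) bi-layer system ∂_t h₁ + ∂_x(λh₁²(ρh₂/2 + h₁/3)) = 0, ∂_t h₂ + ∂_x(λh₁h₂(ρh₂ + h₁/2) + (λρ/(3ν))h₂³) = 0 is strictly hyperbolic at every state with h₁ > 0 and h₂ > 0. -/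
open Matrix Polynomial

/-!
A real `2 × 2` matrix `!![a, b; c, d]` with `0 < b * c` has discriminant
`(a - d) ^ 2 + 4 * (b * c) > 0`, hence two distinct real eigenvalues. The off-diagonal entries of
the flux Jacobian have such a positive product, and `Δ` is a nonzero square times the discriminant.
-/

section FinTwo

theorem discr_fin_two_eq_sq_add {R : Type*} [CommRing R] (A : Matrix (Fin 2) (Fin 2) R) :
    A.discr = (A 0 0 - A 1 1) ^ 2 + 4 * (A 0 1 * A 1 0) := by
  rw [discr_fin_two, trace_fin_two, det_fin_two]
  ring

theorem discr_fin_two_pos_of_mul_offDiag_pos {R : Type*} [CommRing R] [LinearOrder R]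
    [IsStrictOrderedRing R] {A : Matrix (Fin 2) (Fin 2) R} (hA : 0 < A 0 1 * A 1 0) :
    0 < A.discr := by
  rw [discr_fin_two_eq_sq_add]
  positivity

theorem charpoly_fin_two_eq_mul_of_trace_eq_of_det_eq {R : Type*} [CommRing R]
    {A : Matrix (Fin 2) (Fin 2) R} {a b : R} (htrace : A.trace = a + b) (hdet : A.det = a * b) :
    A.charpoly = (X - C a) * (X - C b) := by
  nontriviality R
  rw [charpoly_fin_two, htrace, hdet, C_add, C_mul]
  ring

theorem charpoly_fin_two_eq_mul_of_sq_eq_discr {K : Type*} [Field K] [NeZero (2 : K)]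
    {A : Matrix (Fin 2) (Fin 2) K} {s : K} (hs : s ^ 2 = A.discr) :
    A.charpoly = (X - C ((A.trace - s) / 2)) * (X - C ((A.trace + s) / 2)) := by
  rw [discr_fin_two] at hs
  apply charpoly_fin_two_eq_mul_of_trace_eq_of_det_eq
  · field_simp
    ring
  · field_simp
    linear_combination hs

theorem exists_lt_charpoly_fin_two_eq_mul_of_discr_pos {A : Matrix (Fin 2) (Fin 2) ℝ}
    (hA : 0 < A.discr) :
    ∃ a b : ℝ, a < b ∧ A.charpoly = (X - C a) * (X - C b) := by
  have sqrt_discr_pos : 0 < √A.discr := Real.sqrt_pos.mpr hA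
  exact ⟨(A.trace - √A.discr) / 2, (A.trace + √A.discr) / 2, by linarith,
    charpoly_fin_two_eq_mul_of_sq_eq_discr (Real.sq_sqrt hA.le)⟩

end FinTwo

/-- The Jacobian, with respect to `(h₁, h₂)`, of the inviscid bi-layer flux
`(λ h₁² (ρ h₂ / 2 + h₁ / 3), λ h₁ h₂ (ρ h₂ + h₁ / 2) + λ ρ h₂³ / (3 ν))`, with `lam` for `λ`.
It is only meaningful for `ν ≠ 0`. -/
noncomputable def bilayerFluxJacobian (h₁ h₂ ρ ν lam : ℝ) : Matrix (Fin 2) (Fin 2) ℝ :=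
  lam • !![h₁ ^ 2 + ρ * h₁ * h₂, ρ * h₁ ^ 2 / 2;
           ρ * h₂ ^ 2 + h₁ * h₂, 2 * ρ * h₁ * h₂ + h₁ ^ 2 / 2 + ρ * h₂ ^ 2 / ν]

/-- The quantity `Δ` deciding the hyperbolicity of the inviscid bi-layer system: the discriminant
of the flux Jacobian, scaled by `(2 ν / λ)²` to be a polynomial in which `λ` does not occur. -/
def bilayerDiscr (h₁ h₂ ρ ν : ℝ) : ℝ :=
  (h₁ ^ 4 + 4 * ρ * h₁ ^ 3 * h₂ + 12 * ρ ^ 2 * h₁ ^ 2 * h₂ ^ 2) * ν ^ 2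
    + 4 * ρ * h₁ * h₂ ^ 2 * (2 * ρ * h₂ - h₁) * ν + 4 * ρ ^ 2 * h₂ ^ 4

section Bilayer

variable {h₁ h₂ ρ ν lam : ℝ}

theorem bilayerDiscr_eq_sq_mul_discr (hν : ν ≠ 0) (hlam : lam ≠ 0) :
    bilayerDiscr h₁ h₂ ρ ν = (2 * ν / lam) ^ 2 * (bilayerFluxJacobian h₁ h₂ ρ ν lam).discr := by
  simp only [discr_fin_two_eq_sq_add, bilayerFluxJacobian, bilayerDiscr, smul_of, smul_cons,
    smul_eq_mul, smul_empty, of_apply, cons_val', cons_val_zero, cons_val_one, cons_val_fin_one]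
  field_simp
  ring

theorem bilayerFluxJacobian_mul_offDiag_pos (hh₁ : h₁ ≠ 0) (hh : 0 < ρ * h₂ * (h₁ + ρ * h₂))
    (hlam : lam ≠ 0) :
    0 < bilayerFluxJacobian h₁ h₂ ρ ν lam 0 1 * bilayerFluxJacobian h₁ h₂ ρ ν lam 1 0 := by
  have mul_offDiag_eq :
      bilayerFluxJacobian h₁ h₂ ρ ν lam 0 1 * bilayerFluxJacobian h₁ h₂ ρ ν lam 1 0 =
        (lam * h₁) ^ 2 * (ρ * h₂ * (h₁ + ρ * h₂)) / 2 := by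
    simp only [bilayerFluxJacobian, smul_of, smul_cons, smul_eq_mul, smul_empty, of_apply,
      cons_val', cons_val_zero, cons_val_one, cons_val_fin_one]
    ring
  rw [mul_offDiag_eq]
  positivity

theorem bilayer_inviscid_strictly_hyperbolic_general (hh₁ : h₁ ≠ 0)
    (hh : 0 < ρ * h₂ * (h₁ + ρ * h₂)) (hν : ν ≠ 0) (hlam : lam ≠ 0) :
    0 < bilayerDiscr h₁ h₂ ρ ν ∧ ∃ a b : ℝ, a < b ∧
      (bilayerFluxJacobian h₁ h₂ ρ ν lam).charpoly = (X - C a) * (X - C b) := by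
  have discr_pos : 0 < (bilayerFluxJacobian h₁ h₂ ρ ν lam).discr :=
    discr_fin_two_pos_of_mul_offDiag_pos (bilayerFluxJacobian_mul_offDiag_pos hh₁ hh hlam)
  refine ⟨?_, exists_lt_charpoly_fin_two_eq_mul_of_discr_pos discr_pos⟩
  rw [bilayerDiscr_eq_sq_mul_discr hν hlam]
  positivity

end Bilayer

/-- For positive layer depths `h₁, h₂`, density ratio `ρ` and viscosity ratio `ν`, the
quantity `Δ` is strictly positive; consequently the Jacobian of the inviscid bi-layer flux
has two distinct real eigenvalues at every such state, i.e. the first-order bi-layer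
system is strictly hyperbolic there. -/
theorem bilayer_inviscid_strictly_hyperbolic
    (h₁ h₂ ρ ν lam : ℝ) (hh₁ : 0 < h₁) (hh₂ : 0 < h₂) (hρ : 0 < ρ) (hν : 0 < ν)
    (hlam : 0 < lam)
    (Δ : ℝ)
    (hΔ : Δ = (h₁ ^ 4 + 4 * ρ * h₁ ^ 3 * h₂ + 12 * ρ ^ 2 * h₁ ^ 2 * h₂ ^ 2) * ν ^ 2
        + 4 * ρ * h₁ * h₂ ^ 2 * (2 * ρ * h₂ - h₁) * ν + 4 * ρ ^ 2 * h₂ ^ 4)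
    (J : Matrix (Fin 2) (Fin 2) ℝ)
    (hJ : J = lam • !![h₁ ^ 2 + ρ * h₁ * h₂, ρ * h₁ ^ 2 / 2;
                       ρ * h₂ ^ 2 + h₁ * h₂, 2 * ρ * h₁ * h₂ + h₁ ^ 2 / 2 + ρ * h₂ ^ 2 / ν]) :
    0 < Δ ∧ ∃ a b : ℝ, a < b ∧ J.charpoly = (X - C a) * (X - C b) := by
  subst hΔ hJ
  exact bilayer_inviscid_strictly_hyperbolic_general hh₁.ne' (by positivity) hν.ne' hlam.ne'
end

section
/- Regard Δ(ν) = (h₁⁴ + 4ρh₁³h₂ + 12ρ²h₁²h₂²)ν² + 4ρh₁h₂²(2ρh₂ − h₁)ν + 4ρ²h₂⁴ as a quadratic polynomial in ν with coefficients depending on h₁, h₂, ρ. Its discriminant satisfies the identity (4ρh₁h₂²(2ρh₂ − h₁))² − 4(h₁⁴ + 4ρh₁³h₂ + 12ρ²h₁²h₂²)(4ρ²h₂⁴) = −128ρ³h₁²h₂⁵(h₁ + ρh₂), which is strictly negative whenever h₁ > 0, h₂ > 0 and ρ > 0; since the leading coefficient h₁⁴ + 4ρh₁³h₂ + 12ρ²h₁²h₂²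 is then strictly positive, Δ(ν) > 0 for every ν ∈ ℝ. -/
/-!
In terms of `k = ρh₂` and `w = ρh₂²` the coefficients of `Δ(ν)` are `h₁²(h₁² + 4kh₁ + 12k²)`,
`4wh₁(2k - h₁)` and `4w²`. Hence `16w²h₁²` factors out of the discriminant, and in the cofactor
`(2k - h₁)² - (h₁² + 4kh₁ + 12k²)` the terms `h₁²` cancel, leaving `-8k(h₁ + k)`. Three times the
leading coefficient is `h₁²(2h₁² + (h₁ + 6k)²)`, and completing the square gives `Δ(ν) > 0`.
-/

section Quadratic

variable {R : Type*} [CommRing R]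

theorem four_mul_mul_quadratic_eq_sq_sub_discrim (a b c x : R) :
    4 * a * (a * x ^ 2 + b * x + c) = (2 * a * x + b) ^ 2 - discrim a b c := by
  rw [discrim]
  ring

theorem quadratic_pos_of_discrim_neg [LinearOrder R] [IsStrictOrderedRing R] {a b c : R}
    (ha : 0 ≤ a) (hd : discrim a b c < 0) (x : R) : 0 < a * x ^ 2 + b * x + c := by
  have h : 0 < 4 * a * (a * x ^ 2 + b * x + c) := by
    rw [four_mul_mul_quadratic_eq_sq_sub_discrim]
    exact sub_pos.2 (hd.trans_le (sq_nonneg _))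
  exact pos_of_mul_pos_right h (mul_nonneg zero_le_four ha)

end Quadratic

section Bilayer

variable {R : Type*} [CommRing R]

/-- The coefficient of `ν²` in the hyperbolicity discriminant `Δ(ν)` of the bi-layer
shallow-water system. -/
def bilayerLeadingCoeff (h₁ h₂ ρ : R) : R :=
  h₁ ^ 4 + 4 * ρ * h₁ ^ 3 * h₂ + 12 * ρ ^ 2 * h₁ ^ 2 * h₂ ^ 2

/-- The coefficient of `ν` in the hyperbolicity discriminant `Δ(ν)` of the bi-layer
shallow-water system. -/
def bilayerLinearCoeff (h₁ h₂ ρ : R) : R :=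
  4 * ρ * h₁ * h₂ ^ 2 * (2 * ρ * h₂ - h₁)

/-- The constant coefficient of the hyperbolicity discriminant `Δ(ν)` of the bi-layer
shallow-water system. -/
def bilayerConstCoeff (h₂ ρ : R) : R :=
  4 * ρ ^ 2 * h₂ ^ 4

/-- The discriminant of `Δ(ν)`, regarded as a quadratic polynomial in `ν`. -/
def bilayerDiscrim (h₁ h₂ ρ : R) : R :=
  discrim (bilayerLeadingCoeff h₁ h₂ ρ) (bilayerLinearCoeff h₁ h₂ ρ) (bilayerConstCoeff h₂ ρ)

theorem three_mul_bilayerLeadingCoeff (h₁ h₂ ρ : R) :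
    3 * bilayerLeadingCoeff h₁ h₂ ρ = h₁ ^ 2 * (2 * h₁ ^ 2 + (h₁ + 6 * ρ * h₂) ^ 2) := by
  rw [bilayerLeadingCoeff]
  ring

theorem bilayerDiscrim_eq (h₁ h₂ ρ : R) :
    bilayerDiscrim h₁ h₂ ρ = -128 * ρ ^ 3 * h₁ ^ 2 * h₂ ^ 5 * (h₁ + ρ * h₂) := by
  simp only [bilayerDiscrim, discrim, bilayerLeadingCoeff, bilayerLinearCoeff, bilayerConstCoeff]
  ring

variable [LinearOrder R] [IsStrictOrderedRing R] {h₁ h₂ ρ : R}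

theorem bilayerLeadingCoeff_pos (hh₁ : h₁ ≠ 0) : 0 < bilayerLeadingCoeff h₁ h₂ ρ := by
  have h : 0 < 3 * bilayerLeadingCoeff h₁ h₂ ρ := by
    rw [three_mul_bilayerLeadingCoeff]
    positivity
  exact pos_of_mul_pos_right h zero_le_three

theorem bilayerDiscrim_neg (hh₁ : h₁ ≠ 0) (hprod : 0 < ρ * h₂ * (h₁ + ρ * h₂)) :
    bilayerDiscrim h₁ h₂ ρ < 0 := by
  obtain ⟨hρ, hh₂⟩ : ρ ≠ 0 ∧ h₂ ≠ 0 := mul_ne_zero_iff.1 (left_ne_zero_of_mul hprod.ne')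
  have hpos : 0 < 128 * (ρ * h₁ * h₂ ^ 2) ^ 2 * (ρ * h₂ * (h₁ + ρ * h₂)) := by positivity
  calc
    bilayerDiscrim h₁ h₂ ρ = -(128 * (ρ * h₁ * h₂ ^ 2) ^ 2 * (ρ * h₂ * (h₁ + ρ * h₂))) := by
      rw [bilayerDiscrim_eq]
      ring
    _ < 0 := neg_neg_of_pos hpos

theorem bilayer_discriminant_in_nu_negative_general (hh₁ : h₁ ≠ 0)
    (hprod : 0 < ρ * h₂ * (h₁ + ρ * h₂)) :
    bilayerDiscrim h₁ h₂ ρ = -128 * ρ ^ 3 * h₁ ^ 2 * h₂ ^ 5 * (h₁ + ρ * h₂) ∧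
      bilayerDiscrim h₁ h₂ ρ < 0 ∧
      0 < bilayerLeadingCoeff h₁ h₂ ρ ∧
      ∀ ν : R, 0 < bilayerLeadingCoeff h₁ h₂ ρ * ν ^ 2 + bilayerLinearCoeff h₁ h₂ ρ * ν +
        bilayerConstCoeff h₂ ρ := by
  have hdiscrim : bilayerDiscrim h₁ h₂ ρ < 0 := bilayerDiscrim_neg hh₁ hprod
  have hlead : 0 < bilayerLeadingCoeff h₁ h₂ ρ := bilayerLeadingCoeff_pos hh₁
  exact ⟨bilayerDiscrim_eq h₁ h₂ ρ, hdiscrim, hlead,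
    quadratic_pos_of_discrim_neg hlead.le hdiscrim⟩

end Bilayer

/-- The discriminant (in ν) of the quadratic Δ(ν) governing strict hyperbolicity of the
inviscid bi-layer shallow-water system equals −128ρ³h₁²h₂⁵(h₁ + ρh₂); it is strictly
negative for positive layer depths and density ratio, the leading coefficient is positive,
and hence Δ(ν) > 0 for every real ν. -/
theorem bilayer_discriminant_in_nu_negative
    (h₁ h₂ ρ : ℝ) (hh₁ : 0 < h₁) (hh₂ : 0 < h₂) (hρ : 0 < ρ) :
    ((4 * ρ * h₁ * h₂ ^ 2 * (2 * ρ * h₂ - h₁)) ^ 2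
        - 4 * (h₁ ^ 4 + 4 * ρ * h₁ ^ 3 * h₂ + 12 * ρ ^ 2 * h₁ ^ 2 * h₂ ^ 2)
            * (4 * ρ ^ 2 * h₂ ^ 4)
      = -128 * ρ ^ 3 * h₁ ^ 2 * h₂ ^ 5 * (h₁ + ρ * h₂))
    ∧ ((4 * ρ * h₁ * h₂ ^ 2 * (2 * ρ * h₂ - h₁)) ^ 2
        - 4 * (h₁ ^ 4 + 4 * ρ * h₁ ^ 3 * h₂ + 12 * ρ ^ 2 * h₁ ^ 2 * h₂ ^ 2)
            * (4 * ρ ^ 2 * h₂ ^ 4) < 0)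
    ∧ (0 < h₁ ^ 4 + 4 * ρ * h₁ ^ 3 * h₂ + 12 * ρ ^ 2 * h₁ ^ 2 * h₂ ^ 2)
    ∧ ∀ ν : ℝ,
        0 < (h₁ ^ 4 + 4 * ρ * h₁ ^ 3 * h₂ + 12 * ρ ^ 2 * h₁ ^ 2 * h₂ ^ 2) * ν ^ 2
          + 4 * ρ * h₁ * h₂ ^ 2 * (2 * ρ * h₂ - h₁) * ν + 4 * ρ ^ 2 * h₂ ^ 4 := by
  exact bilayer_discriminant_in_nu_negative_general hh₁.ne' (by positivity)
end

section
/- Fix reals h₁ > 0, h₂ > 0, ρ > 0, ν > 0 and λ ∈ ℝ, and let u₁, u₂ be the zeroth-order bi-layer velocity profiles with layer averages ū₁, ū₂. Then the integrals of the squared velocities decompose exactly as ∫₀^{h₁} u₁(z)² dz = h₁ ū₁² + Q₁ and ∫_{h₁}^{h₁+h₂} u₂(z)² dz = h₂ ū₂² + Q₂, where Q₁ = λ² h₁³ (h₁²/45 + (ρh₂/12)(h₁ + ρh₂)) and Q₂ = λ² ρ² h₂⁵ / (45 ν²). -/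
/-!
The deviation of `∫ u²` from `h ū²` is the integrated variance `∫ (u - ū)²`. A quadratic profile
with slope `c₁` at the midpoint `m` of a layer of thickness `h`, and second derivative `2 c₂`, has
fluctuation `u - ū = c₁ (z - m) + c₂ ((z - m)² - h²/12)`. The two modes are Legendre polynomials up
to scaling, hence orthogonal, with squared norms `h³/12` and `h⁵/180`; so the deviation is
`c₁² h³/12 + c₂² h⁵/180`.
-/

open MeasureTheory (volume)
open intervalIntegral

section Average

theorem sub_mul_interval_average (a b : ℝ) (f : ℝ → ℝ) :
    (b - a) * ⨍ x in a..b, f x = ∫ x in a..b, f x := by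
  rw [interval_average_eq_div]
  rcases eq_or_ne a b with rfl | hab
  · simp
  · exact mul_div_cancel₀ _ (sub_ne_zero.mpr hab.symm)

variable {a b : ℝ} {f : ℝ → ℝ}

theorem integral_sq_eq_sub_mul_sq_average_add (hf : IntervalIntegrable f volume a b)
    (hf_sq : IntervalIntegrable (fun x => f x ^ 2) volume a b) :
    ∫ x in a..b, f x ^ 2 =
      (b - a) * (⨍ x in a..b, f x) ^ 2 + ∫ x in a..b, (f x - ⨍ y in a..b, f y) ^ 2 := by
  have sub_mul_mean := sub_mul_interval_average a b f
  set mean := ⨍ x in a..b, f x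
  have variance_expand : ∫ x in a..b, (f x - mean) ^ 2 =
      (∫ x in a..b, f x ^ 2) - 2 * mean * (∫ x in a..b, f x) + (b - a) * mean ^ 2 :=
    calc ∫ x in a..b, (f x - mean) ^ 2
        = ∫ x in a..b, (f x ^ 2 - 2 * mean * f x + mean ^ 2) := by
          congr 1 with x
          ring
      _ = (∫ x in a..b, f x ^ 2) - 2 * mean * (∫ x in a..b, f x) + (b - a) * mean ^ 2 := by
          rw [integral_add (hf_sq.sub (hf.const_mul _)) intervalIntegrable_const,
            integral_sub hf_sq (hf.const_mul _), integral_const_mul, integral_const, smul_eq_mul]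
  rw [variance_expand, ← sub_mul_mean]
  ring

end Average

section Midpoint

variable (a b : ℝ)

theorem integral_sub_midpoint_pow (n : ℕ) :
    ∫ z in a..b, (z - (a + b) / 2) ^ n =
      (((b - a) / 2) ^ (n + 1) - (-((b - a) / 2)) ^ (n + 1)) / (n + 1) := by
  rw [integral_comp_sub_right (fun t => t ^ n), integral_pow]
  ring

theorem integral_sub_midpoint : ∫ z in a..b, (z - (a + b) / 2) = 0 := by
  simpa using integral_sub_midpoint_pow a b 1

theorem integral_sub_midpoint_sq :
    ∫ z in a..b, (z - (a + b) / 2) ^ 2 = (b - a) ^ 3 / 12 := by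
  rw [integral_sub_midpoint_pow]
  push_cast
  ring

/-- The quadratic Legendre polynomial of the interval from `a` to `b`, scaled to be monic. -/
noncomputable def monicLegendreTwo (z : ℝ) : ℝ :=
  (z - (a + b) / 2) ^ 2 - (b - a) ^ 2 / 12

@[fun_prop]
theorem continuous_monicLegendreTwo : Continuous (monicLegendreTwo a b) := by
  unfold monicLegendreTwo
  fun_prop

theorem integral_monicLegendreTwo : ∫ z in a..b, monicLegendreTwo a b z = 0 := by
  unfold monicLegendreTwo
  rw [integral_sub (Continuous.intervalIntegrable (by fun_prop) a b) intervalIntegrable_const,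
    integral_sub_midpoint_sq, integral_const, smul_eq_mul]
  ring

theorem integral_sub_midpoint_mul_monicLegendreTwo :
    ∫ z in a..b, (z - (a + b) / 2) * monicLegendreTwo a b z = 0 := by
  calc ∫ z in a..b, (z - (a + b) / 2) * monicLegendreTwo a b z
      = ∫ z in a..b, ((z - (a + b) / 2) ^ 3 - (b - a) ^ 2 / 12 * (z - (a + b) / 2)) := by
        congr 1 with z
        rw [monicLegendreTwo]
        ring
    _ = 0 := by
        rw [integral_sub (Continuous.intervalIntegrable (by fun_prop) a b)
            (Continuous.intervalIntegrable (by fun_prop) a b),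
          integral_const_mul, integral_sub_midpoint, integral_sub_midpoint_pow]
        ring

theorem integral_monicLegendreTwo_sq :
    ∫ z in a..b, monicLegendreTwo a b z ^ 2 = (b - a) ^ 5 / 180 := by
  calc ∫ z in a..b, monicLegendreTwo a b z ^ 2
      = ∫ z in a..b, ((z - (a + b) / 2) ^ 4 - (b - a) ^ 2 / 12 * (z - (a + b) / 2) ^ 2
          - (b - a) ^ 2 / 12 * monicLegendreTwo a b z) := by
        congr 1 with z
        rw [monicLegendreTwo]
        ring
    _ = (b - a) ^ 5 / 180 := by
        rw [integral_sub (Continuous.intervalIntegrable (by fun_prop) a b)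
            (Continuous.intervalIntegrable (by fun_prop) a b),
          integral_sub (Continuous.intervalIntegrable (by fun_prop) a b)
            (Continuous.intervalIntegrable (by fun_prop) a b),
          integral_const_mul, integral_const_mul, integral_monicLegendreTwo,
          integral_sub_midpoint_sq, integral_sub_midpoint_pow]
        push_cast
        ring

theorem integral_sq_linear_add_monicLegendreTwo (c₁ c₂ : ℝ) :
    ∫ z in a..b, (c₁ * (z - (a + b) / 2) + c₂ * monicLegendreTwo a b z) ^ 2 =
      c₁ ^ 2 * (b - a) ^ 3 / 12 + c₂ ^ 2 * (b - a) ^ 5 / 180 := by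
  calc ∫ z in a..b, (c₁ * (z - (a + b) / 2) + c₂ * monicLegendreTwo a b z) ^ 2
      = ∫ z in a..b, (c₁ ^ 2 * (z - (a + b) / 2) ^ 2
          + 2 * c₁ * c₂ * ((z - (a + b) / 2) * monicLegendreTwo a b z)
          + c₂ ^ 2 * monicLegendreTwo a b z ^ 2) := by
        congr 1 with z
        ring
    _ = c₁ ^ 2 * (b - a) ^ 3 / 12 + c₂ ^ 2 * (b - a) ^ 5 / 180 := by
        rw [integral_add (Continuous.intervalIntegrable (by fun_prop) a b)
            (Continuous.intervalIntegrable (by fun_prop) a b),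
          integral_add (Continuous.intervalIntegrable (by fun_prop) a b)
            (Continuous.intervalIntegrable (by fun_prop) a b),
          integral_const_mul, integral_const_mul, integral_const_mul, integral_sub_midpoint_sq,
          integral_sub_midpoint_mul_monicLegendreTwo, integral_monicLegendreTwo_sq]
        ring

end Midpoint

section Quadratic

variable {a b c₀ c₁ c₂ : ℝ} {u : ℝ → ℝ}

theorem interval_average_quadratic (hab : a ≠ b)
    (hu : ∀ z, u z = c₀ + c₁ * (z - (a + b) / 2) + c₂ * (z - (a + b) / 2) ^ 2) :
    ⨍ z in a..b, u z = c₀ + c₂ * (b - a) ^ 2 / 12 := by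
  have integral_u : ∫ z in a..b, u z = (b - a) * (c₀ + c₂ * (b - a) ^ 2 / 12) := by
    simp only [hu]
    rw [integral_add (Continuous.intervalIntegrable (by fun_prop) a b)
        (Continuous.intervalIntegrable (by fun_prop) a b),
      integral_add intervalIntegrable_const (Continuous.intervalIntegrable (by fun_prop) a b),
      integral_const, smul_eq_mul, integral_const_mul, integral_const_mul,
      integral_sub_midpoint, integral_sub_midpoint_sq]
    ring
  rw [interval_average_eq_div, integral_u, mul_div_cancel_left₀ _ (sub_ne_zero.mpr hab.symm)]

theorem integral_sq_quadratic_eq_sub_mul_sq_average_add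
    (hu : ∀ z, u z = c₀ + c₁ * (z - (a + b) / 2) + c₂ * (z - (a + b) / 2) ^ 2) :
    ∫ z in a..b, u z ^ 2 =
      (b - a) * (⨍ z in a..b, u z) ^ 2
        + (c₁ ^ 2 * (b - a) ^ 3 / 12 + c₂ ^ 2 * (b - a) ^ 5 / 180) := by
  rcases eq_or_ne a b with rfl | hab
  · simp
  have u_continuous : Continuous u := by
    rw [funext hu]
    fun_prop
  have fluctuation (z : ℝ) : u z - ⨍ y in a..b, u y =
      c₁ * (z - (a + b) / 2) + c₂ * monicLegendreTwo a b z := by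
    rw [interval_average_quadratic hab hu, hu, monicLegendreTwo]
    ring
  rw [integral_sq_eq_sub_mul_sq_average_add (u_continuous.intervalIntegrable a b)
    ((u_continuous.pow 2).intervalIntegrable a b)]
  simp only [fluctuation, integral_sq_linear_add_monicLegendreTwo]

end Quadratic

/-- Exact decomposition of the momentum fluxes of the zeroth-order bi-layer velocity
profiles: `∫₀^{h₁} u₁² = h₁ū₁² + Q₁` and `∫_{h₁}^{h₁+h₂} u₂² = h₂ū₂² + Q₂`, with
`Q₁ = λ²h₁³(h₁²/45 + (ρh₂/12)(h₁ + ρh₂))` and `Q₂ = λ²ρ²h₂⁵/(45ν²)`. -/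
theorem bilayer_momentum_flux_decomposition
    (h₁ h₂ ρ ν lam : ℝ) (hh₁ : 0 < h₁) (hh₂ : 0 < h₂) (hρ : 0 < ρ) (hν : 0 < ν)
    (u₁ u₂ : ℝ → ℝ)
    (hu₁ : ∀ z, u₁ z = lam * (ρ * h₂ * z + h₁ * z - z ^ 2 / 2))
    (hu₂ : ∀ z, u₂ z = lam * h₁ * (ρ * h₂ + h₁ / 2)
        + lam * ρ / ν * (h₂ * (z - h₁) - (z - h₁) ^ 2 / 2))
    (ub₁ ub₂ : ℝ)
    (hub₁ : ub₁ = (∫ z in (0:ℝ)..h₁, u₁ z) / h₁)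
    (hub₂ : ub₂ = (∫ z in h₁..(h₁ + h₂), u₂ z) / h₂) :
    (∫ z in (0:ℝ)..h₁, (u₁ z) ^ 2)
      = h₁ * ub₁ ^ 2 + lam ^ 2 * h₁ ^ 3 * (h₁ ^ 2 / 45 + ρ * h₂ / 12 * (h₁ + ρ * h₂))
    ∧ (∫ z in h₁..(h₁ + h₂), (u₂ z) ^ 2)
      = h₂ * ub₂ ^ 2 + lam ^ 2 * ρ ^ 2 * h₂ ^ 5 / (45 * ν ^ 2) := by
  have average₁ : ⨍ z in (0 : ℝ)..h₁, u₁ z = ub₁ := by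
    rw [hub₁, interval_average_eq_div, sub_zero]
  have average₂ : ⨍ z in h₁..(h₁ + h₂), u₂ z = ub₂ := by
    rw [hub₂, interval_average_eq_div, add_sub_cancel_left]
  have midpoint_form₁ (z : ℝ) : u₁ z = lam * h₁ * (ρ * h₂ / 2 + 3 * h₁ / 8)
      + lam * (ρ * h₂ + h₁ / 2) * (z - (0 + h₁) / 2) + -lam / 2 * (z - (0 + h₁) / 2) ^ 2 := by
    rw [hu₁]
    ring
  have midpoint_form₂ (z : ℝ) : u₂ z =
      lam * h₁ * (ρ * h₂ + h₁ / 2) + lam * ρ / ν * (3 * h₂ ^ 2 / 8)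
        + lam * ρ / ν * h₂ / 2 * (z - (h₁ + (h₁ + h₂)) / 2)
        + -(lam * ρ / ν) / 2 * (z - (h₁ + (h₁ + h₂)) / 2) ^ 2 := by
    rw [hu₂]
    ring
  constructor
  · rw [integral_sq_quadratic_eq_sub_mul_sq_average_add midpoint_form₁, average₁]
    ring
  · rw [integral_sq_quadratic_eq_sub_mul_sq_average_add midpoint_form₂, average₂]
    ring
end

section
/- Fix reals h₁ > 0, h₂ > 0, ρ > 0, ν > 0 and λ ∈ ℝ, and let u₁ be the zeroth-order lower-layer velocity profile with layer average ū₁. Then the wall shear stress satisfies the exact closure u₁′(0) = γ₁(h₁,h₂) · ū₁ / h₁, where γ₁(h₁,h₂) = 6(h₁ + ρh₂)/(2h₁ + 3ρh₂); in particular γ₁(h₁, 0) = 3, recovering the single-layer closure. -/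
/-!
With `s = h₁ + ρ * h₂`, the lower-layer profile is the parabola `lam * (s * z - z ^ 2 / 2)`, whose
slope at the wall is `lam * s` and whose average over `[0, h₁]` is `lam * h₁ * (3 * s - h₁) / 6`.
Both are proportional to `lam`; eliminating `lam` expresses the slope through the average, and
`3 * s - h₁ = 2 * h₁ + 3 * ρ * h₂` is the denominator of `γ₁`.
-/

/-- The parabolic velocity profile vanishing at the wall `z = 0`, with curvature `-lam`. It is the
lower-layer profile of the bi-layer flow, parametrized by the height `s` at which the shear
vanishes: `s = h₁ + ρ * h₂` for two layers and `s = h₁` for a single layer. -/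
noncomputable def parabolicProfile (lam s z : ℝ) : ℝ :=
  lam * (s * z - z ^ 2 / 2)

namespace parabolicProfile

variable (lam s h : ℝ)

theorem hasDerivAt (z : ℝ) : HasDerivAt (parabolicProfile lam s) (lam * (s - z)) z := by
  have hlinear : HasDerivAt (fun z : ℝ ↦ s * z) s z := by
    simpa using (hasDerivAt_id z).const_mul s
  have hsquare : HasDerivAt (fun z : ℝ ↦ z ^ 2 / 2) z z := by
    simpa using (hasDerivAt_pow 2 z).div_const 2
  exact (hlinear.sub hsquare).const_mul lam

theorem deriv_zero : deriv (parabolicProfile lam s) 0 = lam * s := by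
  simpa using (hasDerivAt lam s 0).deriv

theorem integral_eq :
    ∫ z in (0 : ℝ)..h, parabolicProfile lam s z = lam * h ^ 2 * (3 * s - h) / 6 := by
  calc ∫ z in (0 : ℝ)..h, parabolicProfile lam s z
      = lam * (s * (∫ z in (0 : ℝ)..h, z) - (∫ z in (0 : ℝ)..h, z ^ 2) / 2) := by
        simp only [parabolicProfile]
        rw [intervalIntegral.integral_const_mul, intervalIntegral.integral_sub,
          intervalIntegral.integral_const_mul, intervalIntegral.integral_div]
        all_goals exact Continuous.intervalIntegrable (by fun_prop) _ _
    _ = lam * h ^ 2 * (3 * s - h) / 6 := by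
        rw [integral_id, integral_pow]
        ring

variable {s h}

theorem average_eq (hh : h ≠ 0) :
    (∫ z in (0 : ℝ)..h, parabolicProfile lam s z) / h = lam * h * (3 * s - h) / 6 := by
  rw [integral_eq]
  field_simp

theorem deriv_zero_eq_average (hh : h ≠ 0) (hs : 3 * s - h ≠ 0) :
    deriv (parabolicProfile lam s) 0 =
      6 * s / (3 * s - h) * ((∫ z in (0 : ℝ)..h, parabolicProfile lam s z) / h) / h := by
  rw [deriv_zero, average_eq lam hh]
  generalize 3 * s - h = d at hs ⊢
  field_simp

end parabolicProfile

theorem bilayer_wall_stress_closure_general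
    (h₁ h₂ ρ lam : ℝ) (hh₁ : h₁ ≠ 0) (hden : 2 * h₁ + 3 * ρ * h₂ ≠ 0)
    (u₁ : ℝ → ℝ)
    (hu₁ : ∀ z, u₁ z = lam * (ρ * h₂ * z + h₁ * z - z ^ 2 / 2))
    (ub₁ : ℝ)
    (hub₁ : ub₁ = (∫ z in (0 : ℝ)..h₁, u₁ z) / h₁)
    (γ₁ : ℝ → ℝ → ℝ)
    (hγ₁ : ∀ a b, γ₁ a b = 6 * (a + ρ * b) / (2 * a + 3 * ρ * b)) :
    deriv u₁ 0 = γ₁ h₁ h₂ * ub₁ / h₁ ∧ γ₁ h₁ 0 = 3 := by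
  have hprofile : u₁ = parabolicProfile lam (h₁ + ρ * h₂) := by
    ext z
    rw [hu₁, parabolicProfile]
    ring
  have hden_eq : 2 * h₁ + 3 * ρ * h₂ = 3 * (h₁ + ρ * h₂) - h₁ := by ring
  constructor
  · rw [hub₁, hγ₁, hprofile, hden_eq]
    exact parabolicProfile.deriv_zero_eq_average lam hh₁ (hden_eq ▸ hden)
  · rw [hγ₁, mul_zero, mul_zero, add_zero, add_zero]
    field_simp
    norm_num

/-- Exact wall-shear-stress closure for the zeroth-order bi-layer lower velocity profile:
`u₁'(0) = γ₁(h₁,h₂) ū₁ / h₁` with `γ₁(h₁,h₂) = 6(h₁+ρh₂)/(2h₁+3ρh₂)`, and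
`γ₁(h₁,0) = 3`, recovering the single-layer closure. -/
theorem bilayer_wall_stress_closure
    (h₁ h₂ ρ ν lam : ℝ) (hh₁ : 0 < h₁) (hh₂ : 0 < h₂) (hρ : 0 < ρ) (hν : 0 < ν)
    (u₁ : ℝ → ℝ)
    (hu₁ : ∀ z, u₁ z = lam * (ρ * h₂ * z + h₁ * z - z ^ 2 / 2))
    (ub₁ : ℝ)
    (hub₁ : ub₁ = (∫ z in (0:ℝ)..h₁, u₁ z) / h₁)
    (γ₁ : ℝ → ℝ → ℝ)
    (hγ₁ : ∀ a b, γ₁ a b = 6 * (a + ρ * b) / (2 * a + 3 * ρ * b)) :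
    deriv u₁ 0 = γ₁ h₁ h₂ * ub₁ / h₁ ∧ γ₁ h₁ 0 = 3 :=
  bilayer_wall_stress_closure_general h₁ h₂ ρ lam hh₁.ne' (by positivity) u₁ hu₁ ub₁ hub₁ γ₁ hγ₁
end

section
/- Fix reals h₁ > 0, h₂ > 0, ρ > 0, ν > 0 and λ ∈ ℝ, and let u₁ be the zeroth-order lower-layer velocity profile with layer average ū₁. Then the interfacial velocity satisfies the exact closure u₁(h₁) = γ₂(h₁,h₂) · ū₁, where γ₂(h₁,h₂) = 3(h₁ + 2ρh₂)/(2h₁ + 3ρh₂). -/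
theorem integral_linear_add_quadratic (p q a b : ℝ) :
    ∫ z in a..b, (p * z + q * z ^ 2) =
      p * ((b ^ 2 - a ^ 2) / 2) + q * ((b ^ 3 - a ^ 3) / 3) := by
  have hlinear : IntervalIntegrable (fun z : ℝ ↦ p * z) MeasureTheory.volume a b :=
    Continuous.intervalIntegrable (by fun_prop) a b
  have hquadratic : IntervalIntegrable (fun z : ℝ ↦ q * z ^ 2) MeasureTheory.volume a b :=
    Continuous.intervalIntegrable (by fun_prop) a b
  rw [intervalIntegral.integral_add hlinear hquadratic, intervalIntegral.integral_const_mul,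
    intervalIntegral.integral_const_mul, integral_id, integral_pow]
  norm_num

/-- The zeroth-order velocity profile `u₁` of the lower layer of a bi-layer flow, as a function of
the height `z` above the bottom. It is used as a polynomial in `z` on all of `ℝ`, although it is
physically meaningful only for `z ∈ [0, h₁]`. -/
noncomputable def lowerLayerVelocity (h₁ h₂ ρ lam z : ℝ) : ℝ :=
  lam * (ρ * h₂ * z + h₁ * z - z ^ 2 / 2)

namespace lowerLayerVelocity

variable (h₁ h₂ ρ lam : ℝ)

theorem apply_interface :
    lowerLayerVelocity h₁ h₂ ρ lam h₁ = lam * h₁ * (h₁ + 2 * ρ * h₂) / 2 := by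
  unfold lowerLayerVelocity
  ring

theorem integral_eq :
    ∫ z in (0 : ℝ)..h₁, lowerLayerVelocity h₁ h₂ ρ lam z =
      lam * h₁ * (2 * h₁ + 3 * ρ * h₂) / 6 * h₁ := by
  calc ∫ z in (0 : ℝ)..h₁, lowerLayerVelocity h₁ h₂ ρ lam z
      = ∫ z in (0 : ℝ)..h₁, (lam * (ρ * h₂ + h₁) * z + -(lam / 2) * z ^ 2) := by
        congr 1 with z
        unfold lowerLayerVelocity
        ring
    _ = lam * h₁ * (2 * h₁ + 3 * ρ * h₂) / 6 * h₁ := by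
        rw [integral_linear_add_quadratic]
        ring

theorem average_eq {h₁ : ℝ} (hh₁ : h₁ ≠ 0) :
    (∫ z in (0 : ℝ)..h₁, lowerLayerVelocity h₁ h₂ ρ lam z) / h₁ =
      lam * h₁ * (2 * h₁ + 3 * ρ * h₂) / 6 := by
  rw [integral_eq, mul_div_cancel_right₀ _ hh₁]

end lowerLayerVelocity

/-- Exact interfacial-velocity closure for the zeroth-order bi-layer lower velocity
profile: `u₁(h₁) = γ₂(h₁,h₂) ū₁` with `γ₂(h₁,h₂) = 3(h₁+2ρh₂)/(2h₁+3ρh₂)`. -/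
theorem bilayer_interfacial_velocity_closure
    (h₁ h₂ ρ ν lam : ℝ) (hh₁ : 0 < h₁) (hh₂ : 0 < h₂) (hρ : 0 < ρ) (hν : 0 < ν)
    (u₁ : ℝ → ℝ)
    (hu₁ : ∀ z, u₁ z = lam * (ρ * h₂ * z + h₁ * z - z ^ 2 / 2))
    (ub₁ : ℝ)
    (hub₁ : ub₁ = (∫ z in (0:ℝ)..h₁, u₁ z) / h₁)
    (γ₂ : ℝ → ℝ → ℝ)
    (hγ₂ : ∀ a b, γ₂ a b = 3 * (a + 2 * ρ * b) / (2 * a + 3 * ρ * b)) :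
    u₁ h₁ = γ₂ h₁ h₂ * ub₁ := by
  obtain rfl : u₁ = lowerLayerVelocity h₁ h₂ ρ lam := funext hu₁
  calc lowerLayerVelocity h₁ h₂ ρ lam h₁
      = lam * h₁ * (h₁ + 2 * ρ * h₂) / 2 := lowerLayerVelocity.apply_interface h₁ h₂ ρ lam
    _ = 3 * (h₁ + 2 * ρ * h₂) / (2 * h₁ + 3 * ρ * h₂) *
          (lam * h₁ * (2 * h₁ + 3 * ρ * h₂) / 6) := by
        field_simp
        ring
    _ = γ₂ h₁ h₂ * ub₁ := by
        rw [hγ₂, hub₁, lowerLayerVelocity.average_eq h₂ ρ lam hh₁.ne']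
end

section
/- Fix reals h₁ > 0, h₂ > 0, ρ > 0, ν > 0 and λ ∈ ℝ, and let u₂ be the zeroth-order upper-layer velocity profile with layer average ū₂. Then the interfacial shear stress of the upper layer satisfies the exact closure u₂′(h₁) = 3 (ū₂ − u₂(h₁)) / h₂, i.e. the shear at the interface equals three times the difference between the layer-averaged velocity and the interfacial velocity, divided by the layer depth. -/
/-!
A shear `u'` that is linear in `z` and vanishes at the upper end `b` of the layer is
`u' z = (b - z) • k`. Integrating `u` by parts against the primitive `z - b` of `1` leaves
`(b - a) • u a` and the moment of the shear, so that the layer average exceeds `u a` by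
`(b - a)⁻¹ • ∫ (b - z) ^ 2 • k = ((b - a) ^ 2 / 3) • k`, whereas `u' a = (b - a) • k`.
-/

section LinearShear

variable {E : Type*} [NormedAddCommGroup E] [NormedSpace ℝ E] [CompleteSpace E]
  {u u' : ℝ → E} {a b : ℝ} {k : E}

theorem integral_eq_sub_smul_add_integral_sub_smul_deriv
    (hu : ∀ z ∈ Set.uIcc a b, HasDerivAt u (u' z) z)
    (hu' : IntervalIntegrable u' MeasureTheory.volume a b) :
    ∫ z in a..b, u z = (b - a) • u a + ∫ z in a..b, (b - z) • u' z := by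
  have hprimitive : ∀ z ∈ Set.uIcc a b, HasDerivAt (fun z ↦ b - z) (-1) z :=
    fun z _ ↦ (hasDerivAt_id z).const_sub b
  rw [intervalIntegral.integral_smul_deriv_eq_deriv_smul hprimitive hu
    intervalIntegrable_const hu']
  simp

theorem integral_sub_left_sq (a b : ℝ) : ∫ z in a..b, (b - z) ^ 2 = (b - a) ^ 3 / 3 := by
  rw [intervalIntegral.integral_comp_sub_left (fun x ↦ x ^ 2), integral_pow]
  norm_num

theorem integral_eq_of_hasDerivAt_sub_smul
    (hu : ∀ z ∈ Set.uIcc a b, HasDerivAt u ((b - z) • k) z) :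
    ∫ z in a..b, u z = (b - a) • u a + ((b - a) ^ 3 / 3) • k := by
  have hshear : Continuous fun z : ℝ ↦ (b - z) • k := by fun_prop
  rw [integral_eq_sub_smul_add_integral_sub_smul_deriv hu (hshear.intervalIntegrable a b)]
  simp_rw [smul_smul, ← sq]
  rw [intervalIntegral.integral_smul_const, integral_sub_left_sq]

theorem interval_average_sub_left_of_hasDerivAt_sub_smul (hab : a ≠ b)
    (hu : ∀ z ∈ Set.uIcc a b, HasDerivAt u ((b - z) • k) z) :
    (⨍ z in a..b, u z) - u a = ((b - a) ^ 2 / 3) • k := by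
  have hdepth : b - a ≠ 0 := sub_ne_zero.mpr hab.symm
  rw [interval_average_eq, integral_eq_of_hasDerivAt_sub_smul hu, smul_add,
    inv_smul_smul₀ hdepth, add_sub_cancel_left, smul_smul]
  congr 1
  field_simp

theorem bilayer_interfacial_shear_closure_general (hab : a ≠ b)
    (hu : ∀ z ∈ Set.uIcc a b, HasDerivAt u ((b - z) • k) z) :
    deriv u a = (3 / (b - a)) • ((⨍ z in a..b, u z) - u a) := by
  have hdepth : b - a ≠ 0 := sub_ne_zero.mpr hab.symm
  rw [(hu a Set.left_mem_uIcc).deriv, interval_average_sub_left_of_hasDerivAt_sub_smul hab hu,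
    smul_smul]
  congr 1
  field_simp

end LinearShear

theorem hasDerivAt_add_mul_sub_sq_div_two (a c h k z : ℝ) :
    HasDerivAt (fun z ↦ c + k * (h * (z - a) - (z - a) ^ 2 / 2)) ((a + h - z) * k) z := by
  have hshift : HasDerivAt (fun z ↦ z - a) 1 z := (hasDerivAt_id z).sub_const a
  refine ((((hshift.const_mul h).sub ((hshift.pow 2).div_const 2)).const_mul k).const_add
    c).congr_deriv ?_
  ring

/-- Exact interfacial-shear-stress closure for the zeroth-order bi-layer upper velocity
profile: `u₂'(h₁) = 3(ū₂ − u₂(h₁))/h₂`. -/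
theorem bilayer_interfacial_shear_closure
    (h₁ h₂ ρ ν lam : ℝ) (hh₁ : 0 < h₁) (hh₂ : 0 < h₂) (hρ : 0 < ρ) (hν : 0 < ν)
    (u₂ : ℝ → ℝ)
    (hu₂ : ∀ z, u₂ z = lam * h₁ * (ρ * h₂ + h₁ / 2)
        + lam * ρ / ν * (h₂ * (z - h₁) - (z - h₁) ^ 2 / 2))
    (ub₂ : ℝ)
    (hub₂ : ub₂ = (∫ z in h₁..(h₁ + h₂), u₂ z) / h₂) :
    deriv u₂ h₁ = 3 * (ub₂ - u₂ h₁) / h₂ := by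
  have hshear (z : ℝ) : HasDerivAt u₂ ((h₁ + h₂ - z) • (lam * ρ / ν)) z :=
    funext hu₂ ▸ hasDerivAt_add_mul_sub_sq_div_two h₁ _ h₂ _ z
  rw [bilayer_interfacial_shear_closure_general (lt_add_of_pos_right h₁ hh₂).ne
      fun z _ ↦ hshear z, interval_average_eq_div, add_sub_cancel_left, ← hub₂, smul_eq_mul,
    div_mul_eq_mul_div]
end

section
/- Let J and d be real 2×2 matrices, and suppose J has two distinct real eigenvalues Λ̄₁ > Λ̄₂. Assume the low-frequency stability conditions tr(adj(J − Λ̄₁ I₂) · d) < 0 and tr(adj(J − Λ̄₂ I₂) · d) > 0, where adj denotes the adjugate (transposed cofactor) matrix. Then there exists k₀ > 0 such that for every real k with 0 < |k| < k₀, every complex root Λ of the dispersion relation det(Λ I₂ + i k J + k² d) = 0 satisfies Re Λ < 0. Conversely, if one of the two inequalities is strictly reversed, then there exists k₀ > 0 such that for every real k with 0 < |k| < k₀ the dispersion relation has a root with Re Λ > 0. -/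
open Matrix Polynomial

/-!
The dispersion relation is a monic quadratic in `Λ` with complex coefficients. If `z` and `w` are
its roots, then `re z * re w * ((re z + re w) ^ 2 + (im z - im w) ^ 2)` is a polynomial in the real
and imaginary parts of the coefficients, so its sign and the sign of `re z + re w` decide stability
without any expansion of the spectral branches. For the dispersion relation,
`re z + re w = -k² tr d`, and the other quantity is `k⁶ (-P + O(k²))`, where `P` is the product of
the two numbers `tr (adj (J - Λ̄ⱼ I) d)`. Since these numbers differ by `(Λ̄₁ - Λ̄₂) tr d`, the
stability conditions give `tr d > 0` and `P < 0`, and reversing one of them gives `tr d < 0` or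
`P > 0`.
-/

section Quadratic

theorem exists_vieta_of_quadratic_eq_zero {R : Type*} [CommRing R] {a b z : R}
    (hz : z ^ 2 + a * z + b = 0) :
    ∃ w, w ^ 2 + a * w + b = 0 ∧ a = -(z + w) ∧ b = z * w := by
  obtain ⟨w, hw, hsum, hprod⟩ :=
    vieta_formula_quadratic (b := -a) (c := b) (x := z) (by linear_combination hz)
  exact ⟨w, by linear_combination hw, by rw [hsum, neg_neg], hprod.symm⟩

variable {a b z : ℂ}

/-- The second Hurwitz determinant of the complex quadratic `X ^ 2 + a * X + b`; both roots lie in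
the open left half-plane if and only if it and `a.re` are positive. -/
def complexHurwitzDet (a b : ℂ) : ℝ :=
  a.re ^ 2 * b.re + a.re * a.im * b.im - b.im ^ 2

theorem complexHurwitzDet_neg_add_mul (z w : ℂ) :
    complexHurwitzDet (-(z + w)) (z * w) =
      z.re * w.re * ((z.re + w.re) ^ 2 + (z.im - w.im) ^ 2) := by
  simp only [complexHurwitzDet, Complex.neg_re, Complex.neg_im, Complex.add_re, Complex.add_im,
    Complex.mul_re, Complex.mul_im]
  ring

theorem re_neg_of_quadratic_eq_zero (ha : 0 < a.re) (hab : 0 < complexHurwitzDet a b)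
    (hz : z ^ 2 + a * z + b = 0) : z.re < 0 := by
  obtain ⟨w, -, rfl, rfl⟩ := exists_vieta_of_quadratic_eq_zero hz
  rw [complexHurwitzDet_neg_add_mul] at hab
  have hprod : 0 < z.re * w.re := pos_of_mul_pos_left hab (by positivity)
  rw [Complex.neg_re, Complex.add_re] at ha
  rcases pos_and_pos_or_neg_and_neg_of_mul_pos hprod with ⟨hz', hw'⟩ | ⟨hz', -⟩
  · linarith
  · exact hz'

theorem exists_quadratic_eq_zero_re_pos (hab : a.re < 0 ∨ complexHurwitzDet a b < 0) :
    ∃ z : ℂ, z ^ 2 + a * z + b = 0 ∧ 0 < z.re := by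
  obtain ⟨z, hz⟩ : ∃ z, z ^ 2 + a * z + b = 0 := by
    simpa only [one_mul, ← sq] using exists_quadratic_eq_zero (b := a) (c := b) one_ne_zero
      (IsAlgClosed.exists_eq_mul_self _)
  obtain ⟨w, hw, rfl, rfl⟩ := exists_vieta_of_quadratic_eq_zero hz
  suffices 0 < z.re ∨ 0 < w.re from this.elim (⟨z, hz, ·⟩) (⟨w, hw, ·⟩)
  rw [complexHurwitzDet_neg_add_mul, Complex.neg_re, Complex.add_re] at hab
  by_contra! ⟨hz', hw'⟩
  rcases hab with hsum | hprod
  · linarith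
  · exact hprod.not_ge
      (mul_nonneg (mul_nonneg_of_nonpos_of_nonpos hz' hw') (by positivity))

end Quadratic

section FinTwo

variable {R : Type*} [CommRing R]

theorem trace_adjugate_mul_fin_two (A B : Matrix (Fin 2) (Fin 2) R) :
    (A.adjugate * B).trace =
      A 1 1 * B 0 0 - A 0 1 * B 1 0 - A 1 0 * B 0 1 + A 0 0 * B 1 1 := by
  simp only [trace_fin_two, Matrix.mul_apply, Fin.sum_univ_two, adjugate_fin_two, of_apply,
    cons_val_zero, cons_val_one]
  ring

theorem trace_adjugate_sub_smul_one_mul (A B : Matrix (Fin 2) (Fin 2) R) (c : R) :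
    ((A - c • 1).adjugate * B).trace = (A.adjugate * B).trace - B.trace * c := by
  rw [trace_adjugate_mul_fin_two, trace_adjugate_mul_fin_two, trace_fin_two]
  simp only [Matrix.sub_apply, Matrix.smul_apply, one_apply_eq, smul_eq_mul, mul_one, ne_eq,
    zero_ne_one, not_false_eq_true, one_apply_ne, mul_zero, sub_zero, one_ne_zero]
  ring

theorem det_smul_one_add_smul_add_smul_fin_two (A B : Matrix (Fin 2) (Fin 2) R) (x a b : R) :
    (x • 1 + a • A + b • B).det =
      x ^ 2 + (a * A.trace + b * B.trace) * x
        + (a ^ 2 * A.det + a * b * (A.adjugate * B).trace + b ^ 2 * B.det) := by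
  rw [trace_adjugate_mul_fin_two]
  simp only [det_fin_two, trace_fin_two, Matrix.add_apply, Matrix.smul_apply, one_apply_eq,
    smul_eq_mul, mul_one, ne_eq, zero_ne_one, not_false_eq_true, one_apply_ne, mul_zero, zero_add,
    one_ne_zero]
  ring

theorem det_smul_one_sub_smul_fin_two (A : Matrix (Fin 2) (Fin 2) R) (x a : R) :
    (x • 1 - a • A).det = x ^ 2 - x * a * A.trace + a ^ 2 * A.det := by
  rw [show x • 1 - a • A = x • 1 + (-a) • A + (0 : R) • A by module,
    det_smul_one_add_smul_add_smul_fin_two]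
  ring

theorem det_smul_one_sub_smul_of_charpoly_eq {A : Matrix (Fin 2) (Fin 2) R}
    {x y : R} (hA : A.charpoly = (X - C x) * (X - C y)) (a b : R) :
    (a • 1 - b • A).det = (a - b * x) * (a - b * y) := by
  nontriviality R
  rw [charpoly_fin_two] at hA
  have hdet : A.det = x * y := by simpa using congrArg (eval 0) hA
  have htrace : A.trace = x + y := by
    have h : 1 - A.trace + A.det = (1 - x) * (1 - y) := by simpa using congrArg (eval 1) hA
    linear_combination hdet - h
  rw [det_smul_one_sub_smul_fin_two, hdet, htrace]
  ring

end FinTwo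

section DispersionRelation

open Filter Topology

theorem eventually_nhdsNE_zero_iff {E : Type*} [NormedAddGroup E] {p : E → Prop} :
    (∀ᶠ x in 𝓝[≠] 0, p x) ↔ ∃ r, 0 < r ∧ ∀ x, 0 < ‖x‖ → ‖x‖ < r → p x := by
  simp only [eventually_nhdsWithin_iff, Metric.eventually_nhds_iff, dist_zero_right,
    Set.mem_compl_singleton_iff, norm_pos_iff]
  exact exists_congr fun r => and_congr_right fun _ => forall_congr' fun x => forall_comm

theorem tendsto_sq_mul_nhdsNE_zero (c : ℝ) : Tendsto (fun k : ℝ => k ^ 2 * c) (𝓝[≠] 0) (𝓝 0) :=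
  tendsto_nhdsWithin_of_tendsto_nhds <|
    (show Continuous fun k : ℝ => k ^ 2 * c by fun_prop).tendsto' 0 0 (by simp)

/-- The matrix `Λ I + i k J + k² d`, whose determinant vanishes exactly when `∂ₜh + J ∂ₓh = d ∂ₓₓh`
has a nonzero solution proportional to `exp (i k x + Λ t)`. -/
noncomputable def dispersionMatrix {n : Type*} [DecidableEq n] (J d : Matrix n n ℝ) (k : ℝ)
    (Λ : ℂ) : Matrix n n ℂ :=
  Λ • (1 : Matrix n n ℂ) + (Complex.I * (k : ℂ)) • J.map (algebraMap ℝ ℂ)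
    + ((k : ℂ) ^ 2) • d.map (algebraMap ℝ ℂ)

/-- The coefficient of `Λ` in `det (Λ I + i k J + k² d)` for `2 × 2` matrices. -/
def dispersionLinearCoeff (J d : Matrix (Fin 2) (Fin 2) ℝ) (k : ℝ) : ℂ :=
  ⟨k ^ 2 * d.trace, k * J.trace⟩

/-- The constant term in `Λ` of `det (Λ I + i k J + k² d)` for `2 × 2` matrices. -/
def dispersionConstCoeff (J d : Matrix (Fin 2) (Fin 2) ℝ) (k : ℝ) : ℂ :=
  ⟨-(k ^ 2 * J.det) + k ^ 4 * d.det, k ^ 3 * (J.adjugate * d).trace⟩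

variable (J d : Matrix (Fin 2) (Fin 2) ℝ)

theorem det_dispersionMatrix (k : ℝ) (Λ : ℂ) :
    (dispersionMatrix J d k Λ).det =
      Λ ^ 2 + dispersionLinearCoeff J d k * Λ + dispersionConstCoeff J d k := by
  let φ := algebraMap ℝ ℂ
  have htrace (A : Matrix (Fin 2) (Fin 2) ℝ) : (A.map φ).trace = A.trace :=
    (AddMonoidHom.map_trace φ A).symm
  have hdet (A : Matrix (Fin 2) (Fin 2) ℝ) : (A.map φ).det = A.det := (φ.map_det A).symm
  have hadj : ((J.map φ).adjugate * d.map φ).trace = (J.adjugate * d).trace := by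
    rw [← htrace, Matrix.map_mul]
    exact congrArg (fun A => (A * d.map φ).trace) (φ.map_adjugate J).symm
  rw [dispersionMatrix, det_smul_one_add_smul_add_smul_fin_two, htrace, htrace, hdet, hdet, hadj,
    dispersionLinearCoeff, dispersionConstCoeff, Complex.mk_eq_add_mul_I, Complex.mk_eq_add_mul_I]
  push_cast
  linear_combination (k : ℂ) ^ 2 * J.det * Complex.I_sq

/-- Minus the coefficient of `k⁶`, the lowest power of `k`, in the Hurwitz determinant of the
dispersion relation. As a homogenized characteristic polynomial of `J` it is defined whatever the
eigenvalues `Λ̄ⱼ` of `J` are; it equals the product of the two numbers `tr (adj (J - Λ̄ⱼ I) d)`. -/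
noncomputable def lowFrequencyHurwitzCoeff : ℝ :=
  ((J.adjugate * d).trace • 1 - d.trace • J).det

theorem complexHurwitzDet_dispersion (k : ℝ) :
    complexHurwitzDet (dispersionLinearCoeff J d k) (dispersionConstCoeff J d k) =
      k ^ 6 * (k ^ 2 * (d.det * d.trace ^ 2) - lowFrequencyHurwitzCoeff J d) := by
  rw [lowFrequencyHurwitzCoeff, det_smul_one_sub_smul_fin_two]
  simp only [complexHurwitzDet, dispersionLinearCoeff, dispersionConstCoeff]
  ring

variable {J d}

theorem eventually_re_neg_of_det_dispersionMatrix_eq_zero (hd : 0 < d.trace)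
    (hJd : lowFrequencyHurwitzCoeff J d < 0) :
    ∀ᶠ k in 𝓝[≠] (0 : ℝ), ∀ Λ : ℂ, (dispersionMatrix J d k Λ).det = 0 → Λ.re < 0 := by
  have hsmall := (tendsto_sq_mul_nhdsNE_zero (d.det * d.trace ^ 2)).eventually_const_lt hJd
  filter_upwards [hsmall, self_mem_nhdsWithin] with k hk (hk₀ : k ≠ 0)
  intro Λ hΛ
  rw [det_dispersionMatrix] at hΛ
  refine re_neg_of_quadratic_eq_zero (mul_pos (by positivity) hd) ?_ hΛ
  rw [complexHurwitzDet_dispersion]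
  exact mul_pos (by positivity) (sub_pos.mpr hk)

theorem eventually_exists_det_dispersionMatrix_eq_zero_re_pos
    (h : d.trace < 0 ∨ 0 < lowFrequencyHurwitzCoeff J d) :
    ∀ᶠ k in 𝓝[≠] (0 : ℝ), ∃ Λ : ℂ, (dispersionMatrix J d k Λ).det = 0 ∧ 0 < Λ.re := by
  simp only [det_dispersionMatrix]
  rcases h with hd | hJd
  · filter_upwards [self_mem_nhdsWithin] with k (hk₀ : k ≠ 0)
    exact exists_quadratic_eq_zero_re_pos (.inl (mul_neg_of_pos_of_neg (by positivity) hd))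
  · have hsmall := (tendsto_sq_mul_nhdsNE_zero (d.det * d.trace ^ 2)).eventually_lt_const hJd
    filter_upwards [hsmall, self_mem_nhdsWithin] with k hk (hk₀ : k ≠ 0)
    refine exists_quadratic_eq_zero_re_pos (.inr ?_)
    rw [complexHurwitzDet_dispersion]
    exact mul_neg_of_pos_of_neg (by positivity) (sub_neg.mpr hk)

theorem lowFrequencyHurwitzCoeff_eq_mul {Λ₁ Λ₂ : ℝ}
    (hcp : J.charpoly = (X - C Λ₁) * (X - C Λ₂)) :
    lowFrequencyHurwitzCoeff J d =
      ((J - Λ₁ • 1).adjugate * d).trace * ((J - Λ₂ • 1).adjugate * d).trace := by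
  rw [lowFrequencyHurwitzCoeff, det_smul_one_sub_smul_of_charpoly_eq hcp,
    trace_adjugate_sub_smul_one_mul, trace_adjugate_sub_smul_one_mul]

end DispersionRelation

theorem dispersion_relation_low_frequency_stability_general
    (J d : Matrix (Fin 2) (Fin 2) ℝ) (Λ₁ Λ₂ : ℝ) (hΛ : Λ₂ ≤ Λ₁)
    (hcp : J.charpoly = (X - C Λ₁) * (X - C Λ₂)) :
    ((((J - Λ₁ • 1).adjugate * d).trace < 0 ∧ 0 < ((J - Λ₂ • 1).adjugate * d).trace) →
      ∃ k₀ : ℝ, 0 < k₀ ∧ ∀ k : ℝ, 0 < |k| → |k| < k₀ → ∀ Λ : ℂ,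
        (Λ • (1 : Matrix (Fin 2) (Fin 2) ℂ)
            + (Complex.I * (k : ℂ)) • J.map (algebraMap ℝ ℂ)
            + ((k : ℂ) ^ 2) • d.map (algebraMap ℝ ℂ)).det = 0 → Λ.re < 0)
    ∧ ((0 < ((J - Λ₁ • 1).adjugate * d).trace ∨ ((J - Λ₂ • 1).adjugate * d).trace < 0) →
      ∃ k₀ : ℝ, 0 < k₀ ∧ ∀ k : ℝ, 0 < |k| → |k| < k₀ → ∃ Λ : ℂ,
        (Λ • (1 : Matrix (Fin 2) (Fin 2) ℂ)
            + (Complex.I * (k : ℂ)) • J.map (algebraMap ℝ ℂ)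
            + ((k : ℂ) ^ 2) • d.map (algebraMap ℝ ℂ)).det = 0 ∧ 0 < Λ.re) := by
  have hdiff : ((J - Λ₂ • 1).adjugate * d).trace - ((J - Λ₁ • 1).adjugate * d).trace =
      (Λ₁ - Λ₂) * d.trace := by
    rw [trace_adjugate_sub_smul_one_mul, trace_adjugate_sub_smul_one_mul]
    ring
  have hcoeff := lowFrequencyHurwitzCoeff_eq_mul (d := d) hcp
  have hΛ' : 0 ≤ Λ₁ - Λ₂ := sub_nonneg.mpr hΛ
  constructor
  · rintro ⟨h₁, h₂⟩
    have hd : 0 < d.trace := pos_of_mul_pos_right (hdiff ▸ sub_pos.mpr (h₁.trans h₂)) hΛ'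
    exact eventually_nhdsNE_zero_iff.mp
      (eventually_re_neg_of_det_dispersionMatrix_eq_zero hd (hcoeff ▸ mul_neg_of_neg_of_pos h₁ h₂))
  · intro h
    refine eventually_nhdsNE_zero_iff.mp (eventually_exists_det_dispersionMatrix_eq_zero_re_pos ?_)
    refine (lt_or_ge d.trace 0).imp_right fun hd => ?_
    have hle := sub_nonneg.mp (hdiff ▸ mul_nonneg hΛ' hd)
    rw [hcoeff]
    rcases h with h₁ | h₂
    · exact mul_pos h₁ (h₁.trans_le hle)
    · exact mul_pos_of_neg_of_neg (hle.trans_lt h₂) h₂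

/-- Low-frequency spectral stability criterion: if `J` has two distinct real eigenvalues
`Λ̄₁ > Λ̄₂` and `tr(adj(J − Λ̄₁ I) d) < 0`, `tr(adj(J − Λ̄₂ I) d) > 0`, then for all
sufficiently small nonzero wavenumbers `k` every root `Λ` of
`det(Λ I + i k J + k² d) = 0` has `Re Λ < 0`; if one of the two sign conditions is
strictly reversed, then for all sufficiently small nonzero `k` there is a root with
`Re Λ > 0`. -/
theorem dispersion_relation_low_frequency_stability
    (J d : Matrix (Fin 2) (Fin 2) ℝ) (Λ₁ Λ₂ : ℝ) (hΛ : Λ₂ < Λ₁)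
    (hcp : J.charpoly = (X - C Λ₁) * (X - C Λ₂)) :
    ((((J - Λ₁ • 1).adjugate * d).trace < 0 ∧ 0 < ((J - Λ₂ • 1).adjugate * d).trace) →
      ∃ k₀ : ℝ, 0 < k₀ ∧ ∀ k : ℝ, 0 < |k| → |k| < k₀ → ∀ Λ : ℂ,
        (Λ • (1 : Matrix (Fin 2) (Fin 2) ℂ)
            + (Complex.I * (k : ℂ)) • J.map (algebraMap ℝ ℂ)
            + ((k : ℂ) ^ 2) • d.map (algebraMap ℝ ℂ)).det = 0 → Λ.re < 0)
    ∧ ((0 < ((J - Λ₁ • 1).adjugate * d).trace ∨ ((J - Λ₂ • 1).adjugate * d).trace < 0) →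
      ∃ k₀ : ℝ, 0 < k₀ ∧ ∀ k : ℝ, 0 < |k| → |k| < k₀ → ∃ Λ : ℂ,
        (Λ • (1 : Matrix (Fin 2) (Fin 2) ℂ)
            + (Complex.I * (k : ℂ)) • J.map (algebraMap ℝ ℂ)
            + ((k : ℂ) ^ 2) • d.map (algebraMap ℝ ℂ)).det = 0 ∧ 0 < Λ.re) :=
  dispersion_relation_low_frequency_stability_general J d Λ₁ Λ₂ hΛ.le hcp
end
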